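/- For every a, b, c ∈ ℕ there exist constants κ > 0 and C > 0 such that for all η > 0, σ > 0 and all p ∈ ℝ with |p| ≤ κ / R(η,σ), the iterated partial derivative ∂_η^a ∂_σ^b ∂_p^c of the function (η,σ,p) ↦ 1/(⟨p+η+σ⟩ − ⟨η⟩ − ⟨σ⟩) satisfies |∂_η^a ∂_σ^b ∂_p^c [1/(⟨p+η+σ⟩ − ⟨η⟩ − ⟨σ⟩)]| ≤ C · R(η,σ)^{1+c} · ⟨η⟩^{−a} · ⟨σ⟩^{−b}. -/

import Mathlib

/-- The Japanese bracket `⟨x⟩ = √(1 + x²)`. -/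
noncomputable def jb (x : ℝ) : ℝ := Real.sqrt (1 + x ^ 2)

/-- `R(η,σ) = ⟨η⟩⟨σ⟩/(⟨η⟩+⟨σ⟩)`, comparable to `min(⟨η⟩,⟨σ⟩)`. -/
noncomputable def Rf (η σ : ℝ) : ℝ := jb η * jb σ / (jb η + jb σ)

/-- The reciprocal of the `(+,+)` phase, `(⟨p+η+σ⟩ − ⟨η⟩ − ⟨σ⟩)⁻¹`. -/
noncomputable def recPhiPP (η σ p : ℝ) : ℝ := (jb (p + η + σ) - jb η - jb σ)⁻¹

/-- The iterated partial derivative `∂_η^a ∂_σ^b ∂_p^c` of `recPhiPP`, taken one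
variable at a time. -/
noncomputable def DrecPhiPP (a b c : ℕ) (η σ p : ℝ) : ℝ :=
  iteratedDeriv a (fun η' =>
    iteratedDeriv b (fun σ' =>
      iteratedDeriv c (fun p' => recPhiPP η' σ' p') p) σ) η

/-! Call a function a symbol of weight `w` if each derivative multiplies its bound `w` by a
prescribed gain. By the Leibniz rule symbols are closed under products, and by
`∂(1/f) = -(1/f)² ∂f` the reciprocal of a symbol comparable to its weight is again a symbol. It
therefore suffices to show that the phase is a symbol of weight `R⁻¹` comparable to `R⁻¹`, where
`∂_η`, `∂_σ`, `∂_p` gain `⟨η⟩⁻¹`, `⟨σ⟩⁻¹` and `R`.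

At `p = 0` the size of the phase is read off from
`(⟨η⟩ + ⟨σ⟩ - ⟨η+σ⟩)(⟨η⟩ + ⟨σ⟩ + ⟨η+σ⟩) = 1 + 2(⟨η⟩⟨σ⟩ - ησ)`; since `⟨·⟩` is `1`-Lipschitz, a
perturbation `|p| ≪ R⁻¹` is harmless. The derivatives of the phase are controlled by
`x/⟨x⟩ - 1 = O(⟨x⟩⁻²)` for `x ≥ 0`: in `∂_η` and `∂_σ` the two limits `1` cancel.
-/

open Asymptotics Filter Set

lemma isBigO_principal_of_norm_le {α F : Type*} [Norm F] {s : Set α} {f : α → F} {w : α → ℝ}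
    {C : ℝ} (hC : 0 ≤ C) (h : ∀ x ∈ s, ‖f x‖ ≤ C * w x) : f =O[𝓟 s] w :=
  .of_bound C <| eventually_principal.2 fun x hx =>
    (h x hx).trans (mul_le_mul_of_nonneg_left (le_abs_self _) hC)

/-- The data against which symbol estimates are measured: an open set, the directions in which
functions are differentiated, and for each direction the weight which one derivative in that
direction contributes to the bound. -/
structure SymbolFrame (E ι : Type*) [TopologicalSpace E] where
  domain : Set E
  isOpen_domain : IsOpen domain
  dir : ι → E
  gain : ι → E → ℝ

namespace SymbolFrame

variable {𝕜 E E' ι ι' : Type*} [NontriviallyNormedField 𝕜]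
  [NormedAddCommGroup E] [NormedSpace 𝕜 E] [NormedAddCommGroup E'] [NormedSpace 𝕜 E']

/-- The derivative of `f` in the `i`-th direction of the frame, as a function. -/
noncomputable def dirDeriv (S : SymbolFrame E ι) (i : ι) (f : E → 𝕜) : E → 𝕜 :=
  fun x => lineDeriv 𝕜 f x (S.dir i)

/-- Symbols of weight `w` and regularity `n`: on the domain, every iterated derivative of order
at most `n` is bounded by a multiple of `w` times the product of the gains of its directions. -/
def IsSymbol (S : SymbolFrame E ι) : ℕ → (E → ℝ) → (E → 𝕜) → Prop
  | 0, w, f => f =O[𝓟 S.domain] w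
  | n + 1, w, f => f =O[𝓟 S.domain] w ∧ DifferentiableOn 𝕜 f S.domain ∧
      ∀ i, S.IsSymbol n (w * S.gain i) (S.dirDeriv i f)

variable {S : SymbolFrame E ι} {S' : SymbolFrame E' ι'} {n : ℕ} {w v : E → ℝ} {f g : E → 𝕜}

lemma dirDeriv_eqOn_of_hasFDerivAt {f' : E → E →L[𝕜] 𝕜}
    (hf : ∀ x ∈ S.domain, HasFDerivAt f (f' x) x) (i : ι) :
    EqOn (S.dirDeriv i f) (fun x => f' x (S.dir i)) S.domain :=
  fun x hx => ((hf x hx).hasLineDerivAt _).lineDeriv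

lemma dirDeriv_eqOn_congr (hfg : EqOn f g S.domain) (i : ι) :
    EqOn (S.dirDeriv i f) (S.dirDeriv i g) S.domain :=
  fun _ hx => (hfg.eventuallyEq_of_mem (S.isOpen_domain.mem_nhds hx)).lineDeriv_eq

lemma dirDeriv_const (i : ι) (c : 𝕜) : S.dirDeriv i (fun _ => c) = fun _ => 0 :=
  funext fun x => ((hasFDerivAt_const c x).hasLineDerivAt _).lineDeriv

lemma iteratedDeriv_comp_line {γ : 𝕜 → E} {i : ι} (hγ : ∀ s t, γ (s + t) = γ s + t • S.dir i)
    (f : E → 𝕜) (a : ℕ) : iteratedDeriv a (f ∘ γ) = (S.dirDeriv i)^[a] f ∘ γ := by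
  induction a with
  | zero => simp
  | succ a ih =>
    ext t
    rw [iteratedDeriv_succ, ih, Function.comp_apply, Function.iterate_succ_apply', dirDeriv,
      lineDeriv]
    simp only [← hγ]
    simpa using (deriv_comp_const_add ((S.dirDeriv i)^[a] f ∘ γ) t 0).symm

namespace IsSymbol

lemma isBigO (h : S.IsSymbol n w f) : f =O[𝓟 S.domain] w := by
  cases n with
  | zero => exact h
  | succ n => exact h.1

lemma hasFDerivAt (h : S.IsSymbol (n + 1) w f) {x : E} (hx : x ∈ S.domain) :
    HasFDerivAt f (fderiv 𝕜 f x) x :=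
  ((h.2.1 x hx).differentiableAt (S.isOpen_domain.mem_nhds hx)).hasFDerivAt

lemma fderiv_dir (h : S.IsSymbol (n + 1) w f) {x : E} (hx : x ∈ S.domain) (i : ι) :
    fderiv 𝕜 f x (S.dir i) = S.dirDeriv i f x :=
  ((h.hasFDerivAt hx).hasLineDerivAt _).lineDeriv.symm

lemma of_succ (h : S.IsSymbol (n + 1) w f) : S.IsSymbol n w f := by
  induction n generalizing w f with
  | zero => exact h.isBigO
  | succ n ih => exact ⟨h.1, h.2.1, fun i => ih (h.2.2 i)⟩

lemma mono (h : S.IsSymbol n w f) (hwv : w =O[𝓟 S.domain] v) : S.IsSymbol n v f := by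
  induction n generalizing w v f with
  | zero => exact h.isBigO.trans hwv
  | succ n ih =>
    exact ⟨h.1.trans hwv, h.2.1, fun i => ih (h.2.2 i) (hwv.mul (isBigO_refl _ _))⟩

lemma congr_weight (h : S.IsSymbol n w f) (hwv : EqOn w v S.domain) : S.IsSymbol n v f :=
  h.mono hwv.eventuallyEq.isBigO

lemma congr (h : S.IsSymbol n w f) (hfg : EqOn f g S.domain) : S.IsSymbol n w g := by
  induction n generalizing w f g with
  | zero => exact h.isBigO.congr' hfg.eventuallyEq .rfl
  | succ n ih =>
    exact ⟨h.1.congr' hfg.eventuallyEq .rfl, h.2.1.congr fun x hx => (hfg hx).symm,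
      fun i => ih (h.2.2 i) (dirDeriv_eqOn_congr hfg i)⟩

lemma of_hasFDerivAt {f' : E → E →L[𝕜] 𝕜} (hb : f =O[𝓟 S.domain] w)
    (hf : ∀ x ∈ S.domain, HasFDerivAt f (f' x) x)
    (hf' : ∀ i, S.IsSymbol n (w * S.gain i) (fun x => f' x (S.dir i))) :
    S.IsSymbol (n + 1) w f :=
  ⟨hb, fun x hx => (hf x hx).differentiableAt.differentiableWithinAt,
    fun i => (hf' i).congr (dirDeriv_eqOn_of_hasFDerivAt hf i).symm⟩

lemma zero : S.IsSymbol n w (fun _ => (0 : 𝕜)) := by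
  induction n generalizing w with
  | zero => exact isBigO_zero _ _
  | succ n ih =>
    exact ⟨isBigO_zero _ _, differentiableOn_const _, fun i => by simpa [dirDeriv_const] using ih⟩

lemma const (c : 𝕜) : S.IsSymbol n (fun _ => ‖c‖) (fun _ => c) := by
  have hb : (fun _ : E => c) =O[𝓟 S.domain] fun _ => ‖c‖ := (isBigO_refl _ _).norm_right
  cases n with
  | zero => exact hb
  | succ n => exact ⟨hb, differentiableOn_const _, fun i => by simpa [dirDeriv_const] using zero⟩

lemma add (hf : S.IsSymbol n w f) (hg : S.IsSymbol n w g) : S.IsSymbol n w (f + g) := by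
  induction n generalizing w f g with
  | zero => exact hf.isBigO.add hg.isBigO
  | succ n ih =>
    refine of_hasFDerivAt (hf.1.add hg.1)
      (fun x hx => (hf.hasFDerivAt hx).add (hg.hasFDerivAt hx)) fun i => ?_
    refine (ih (hf.2.2 i) (hg.2.2 i)).congr fun x hx => ?_
    simp [hf.fderiv_dir hx, hg.fderiv_dir hx]

lemma mul (hf : S.IsSymbol n w f) (hg : S.IsSymbol n v g) :
    S.IsSymbol n (w * v) (f * g) := by
  induction n generalizing w v f g with
  | zero => exact hf.isBigO.mul hg.isBigO
  | succ n ih =>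
    refine of_hasFDerivAt (hf.1.mul hg.1)
      (fun x hx => (hf.hasFDerivAt hx).mul (hg.hasFDerivAt hx)) fun i => ?_
    have h₁ : S.IsSymbol n (w * v * S.gain i) (f * S.dirDeriv i g) := by
      simpa only [mul_assoc] using ih hf.of_succ (hg.2.2 i)
    have h₂ : S.IsSymbol n (w * v * S.gain i) (S.dirDeriv i f * g) := by
      simpa only [mul_right_comm] using ih (hf.2.2 i) hg.of_succ
    refine (h₁.add h₂).congr fun x hx => ?_
    simp [hf.fderiv_dir hx, hg.fderiv_dir hx, mul_comm (g x)]

lemma neg (hf : S.IsSymbol n w f) : S.IsSymbol n w (-f) := by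
  refine (((const (-1)).mul hf).congr_weight fun x _ => ?_).congr fun x _ => ?_ <;> simp

lemma sub (hf : S.IsSymbol n w f) (hg : S.IsSymbol n w g) : S.IsSymbol n w (f - g) := by
  simpa only [sub_eq_add_neg] using hf.add hg.neg

lemma inv (hf : S.IsSymbol n w f) (hw : ∀ x ∈ S.domain, w x ≠ 0) (hwf : w =O[𝓟 S.domain] f) :
    S.IsSymbol n w⁻¹ f⁻¹ := by
  have hf₀ : ∀ x ∈ S.domain, f x ≠ 0 := fun x hx h =>
    hw x hx (eventually_principal.1 hwf.eq_zero_imp x hx h)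
  have hb : f⁻¹ =O[𝓟 S.domain] w⁻¹ :=
    hwf.inv_rev (eventually_principal.2 fun x hx h => absurd h (hw x hx))
  induction n with
  | zero => exact hb
  | succ n ih =>
    refine of_hasFDerivAt hb (fun x hx =>
      (hasDerivAt_inv (hf₀ x hx)).comp_hasFDerivAt x (hf.hasFDerivAt hx)) fun i => ?_
    have h_inv := ih hf.of_succ
    refine (((h_inv.mul h_inv).mul (hf.2.2 i)).neg.congr_weight fun x hx => ?_).congr
      fun x hx => ?_
    · have := hw x hx
      simp only [Pi.mul_apply, Pi.inv_apply]
      field_simp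
    · simp [hf.fderiv_dir hx, sq]

lemma comp_continuousLinearMap {h : E' → 𝕜} {u : E' → ℝ} (hh : S'.IsSymbol n u h)
    (L : E →L[𝕜] E') (hL : MapsTo L S.domain S'.domain)
    (hdir : ∀ i, ∃ j, ∃ c : 𝕜, L (S.dir i) = c • S'.dir j ∧
      (fun x => ‖c‖ * S'.gain j (L x)) =O[𝓟 S.domain] S.gain i) :
    S.IsSymbol n (u ∘ L) (h ∘ L) := by
  have hL' : Tendsto L (𝓟 S.domain) (𝓟 S'.domain) := tendsto_principal_principal.2 hL
  induction n generalizing u h with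
  | zero => exact hh.isBigO.comp_tendsto hL'
  | succ n ih =>
    refine of_hasFDerivAt (hh.isBigO.comp_tendsto hL')
      (fun x hx => (hh.hasFDerivAt (hL hx)).comp x L.hasFDerivAt) fun i => ?_
    obtain ⟨j, c, hc, hgain⟩ := hdir i
    refine (((const c).mul (ih (hh.2.2 j))).mono ?_).congr fun x hx => ?_
    · exact ((isBigO_refl (u ∘ L) _).mul hgain).congr_left fun x => mul_left_comm _ _ _
    · simp [hc, hh.fderiv_dir (hL hx)]

lemma iterate_dirDeriv {a : ℕ} (h : S.IsSymbol (n + a) w f) (i : ι) :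
    S.IsSymbol n (w * S.gain i ^ a) ((S.dirDeriv i)^[a] f) := by
  induction a generalizing n with
  | zero => simpa using h
  | succ a ih =>
    have h' : S.IsSymbol (n + 1 + a) w f := by rwa [add_right_comm]
    simpa only [Function.iterate_succ_apply', pow_succ, mul_assoc] using (ih h').2.2 i

end IsSymbol

end SymbolFrame

lemma one_le_jb (x : ℝ) : 1 ≤ jb x := Real.one_le_sqrt.2 (by nlinarith [sq_nonneg x])

lemma jb_pos (x : ℝ) : 0 < jb x := one_pos.trans_le (one_le_jb x)

lemma jb_sq (x : ℝ) : jb x ^ 2 = 1 + x ^ 2 := Real.sq_sqrt (by positivity)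

lemma continuous_jb : Continuous jb := by unfold jb; fun_prop

lemma abs_le_jb (x : ℝ) : |x| ≤ jb x := Real.abs_le_sqrt (by linarith)

lemma jb_le_jb {x y : ℝ} (hx : 0 ≤ x) (hxy : x ≤ y) : jb x ≤ jb y :=
  Real.sqrt_le_sqrt (by nlinarith)

lemma abs_jb_sub_jb_le (x y : ℝ) : |jb x - jb y| ≤ |x - y| := by
  have h_le : ∀ x y : ℝ, jb x ≤ jb y + |x - y| := fun x y => by
    have hy := jb_pos y
    have h : y * (x - y) ≤ jb y * |x - y| :=
      (le_abs_self _).trans (by rw [abs_mul]; gcongr; exact abs_le_jb y)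
    exact Real.sqrt_le_iff.2 ⟨by positivity, by nlinarith [jb_sq y, sq_abs (x - y)]⟩
  exact abs_sub_le_iff.2 ⟨by linarith [h_le x y], by linarith [h_le y x, abs_sub_comm x y]⟩

lemma hasDerivAt_jb (x : ℝ) : HasDerivAt jb (x / jb x) x := by
  have h : HasDerivAt (fun y : ℝ => 1 + y ^ 2) (2 * x) x := by
    simpa using (hasDerivAt_pow 2 x).const_add 1
  exact (h.sqrt (by positivity)).congr_deriv (by rw [jb, mul_div_mul_left _ _ two_ne_zero])

lemma hasDerivAt_div_jb (x : ℝ) : HasDerivAt (fun y => y / jb y) ((jb x)⁻¹ ^ 3) x := by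
  have h := jb_pos x
  refine ((hasDerivAt_id' x).fun_div (hasDerivAt_jb x) h.ne').congr_deriv ?_
  field_simp
  linarith [jb_sq x]

lemma abs_div_jb_sub_one_le {x : ℝ} (hx : -1 < x) : |x / jb x - 1| ≤ 4 * (jb x)⁻¹ ^ 2 := by
  have h := jb_pos x
  have h_le : x ≤ jb x := (le_abs_self x).trans (abs_le_jb x)
  have h_num : jb x * (jb x - x) ≤ 4 := by
    rcases le_or_gt 0 x with _ | _ <;> nlinarith [jb_sq x, one_le_jb x]
  rw [div_sub_one h.ne', abs_div, abs_of_pos h, abs_of_nonpos (by linarith), inv_pow,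
    ← div_eq_mul_inv, div_le_div_iff₀ h (by positivity)]
  nlinarith

/-- The one-dimensional frame in which `∂_x` gains `⟨x⟩⁻¹`. The domain extends beyond the half-line
`x ≥ 0` because `p + η + σ` may be slightly negative. -/
noncomputable def bracketFrame : SymbolFrame ℝ Unit where
  domain := Ioi (-1)
  isOpen_domain := isOpen_Ioi
  dir _ := 1
  gain _ x := (jb x)⁻¹

namespace bracketFrame

open SymbolFrame (IsSymbol)

variable {n : ℕ}

lemma isSymbol_of_hasDerivAt {w f f' : ℝ → ℝ}
    (hb : f =O[𝓟 bracketFrame.domain] w) (hf : ∀ x, HasDerivAt f (f' x) x)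
    (hf' : bracketFrame.IsSymbol n (w * jb⁻¹) f') : bracketFrame.IsSymbol (n + 1) w f :=
  .of_hasFDerivAt hb (fun x _ => (hf x).hasFDerivAt) fun _ =>
    hf'.congr fun x _ => by simp [bracketFrame]

lemma isSymbol_id : bracketFrame.IsSymbol n jb id := by
  have hb : (id : ℝ → ℝ) =O[𝓟 bracketFrame.domain] jb :=
    isBigO_principal_of_norm_le zero_le_one fun x _ => by simpa using abs_le_jb x
  cases n with
  | zero => exact hb
  | succ n =>
    refine isSymbol_of_hasDerivAt hb hasDerivAt_id ((IsSymbol.const 1).congr_weight fun x _ => ?_)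
    simp [(jb_pos x).ne']

/-- The derivative of `⟨x⟩` is `x * ⟨x⟩⁻¹`, so the algebra of symbols feeds the estimates of `⟨x⟩`
of one order back into those of the next. -/
lemma isSymbol_jb : bracketFrame.IsSymbol n jb jb := by
  induction n with
  | zero => exact isBigO_refl _ _
  | succ n ih =>
    have h_inv := ih.inv (fun x _ => (jb_pos x).ne') (isBigO_refl _ _)
    exact isSymbol_of_hasDerivAt (isBigO_refl _ _) hasDerivAt_jb (isSymbol_id.mul h_inv)

lemma isSymbol_jb_inv : bracketFrame.IsSymbol n jb⁻¹ jb⁻¹ :=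
  isSymbol_jb.inv (fun x _ => (jb_pos x).ne') (isBigO_refl _ _)

lemma isSymbol_div_jb : bracketFrame.IsSymbol n (fun _ => 1) (fun x => x / jb x) :=
  (isSymbol_id.mul isSymbol_jb_inv).congr_weight fun x _ => by simp [(jb_pos x).ne']

lemma isSymbol_div_jb_sub_one :
    bracketFrame.IsSymbol n (jb⁻¹ ^ 2) (fun x => x / jb x - 1) := by
  have hb : (fun x => x / jb x - 1) =O[𝓟 bracketFrame.domain] (jb⁻¹ ^ 2) :=
    isBigO_principal_of_norm_le zero_le_four fun _ hx => abs_div_jb_sub_one_le hx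
  cases n with
  | zero => exact hb
  | succ n =>
    refine isSymbol_of_hasDerivAt hb (fun x => (hasDerivAt_div_jb x).sub_const 1) ?_
    have h_cube := isSymbol_jb_inv.mul (isSymbol_jb_inv.mul (isSymbol_jb_inv (n := n)))
    refine (h_cube.congr_weight fun x _ => ?_).congr fun x _ => ?_ <;>
      simp only [Pi.mul_apply, Pi.pow_apply, Pi.inv_apply] <;> ring

end bracketFrame

lemma Rf_pos (η σ : ℝ) : 0 < Rf η σ :=
  div_pos (mul_pos (jb_pos η) (jb_pos σ)) (add_pos (jb_pos η) (jb_pos σ))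

lemma Rf_comm (η σ : ℝ) : Rf η σ = Rf σ η := by rw [Rf, Rf, mul_comm, add_comm]

lemma Rf_le_left (η σ : ℝ) : Rf η σ ≤ jb η := by
  have hη := jb_pos η
  have hσ := jb_pos σ
  rw [Rf, div_le_iff₀ (by positivity)]
  nlinarith

lemma half_le_Rf (η σ : ℝ) : 1 / 2 ≤ Rf η σ := by
  have hη := one_le_jb η
  have hσ := one_le_jb σ
  rw [Rf, le_div_iff₀ (by positivity)]
  nlinarith

lemma jb_add_jb_sub_jb_add_mul (η σ : ℝ) :
    (jb η + jb σ - jb (η + σ)) * (jb η + jb σ + jb (η + σ)) =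
      1 + 2 * (jb η * jb σ - η * σ) := by
  linear_combination jb_sq η + jb_sq σ - jb_sq (η + σ)

lemma jb_mul_jb_sub_mul_bounds {η σ : ℝ} (h : 0 ≤ η * σ) :
    jb η ^ 2 + jb σ ^ 2 - 1 ≤ 2 * (jb η * jb σ) * (jb η * jb σ - η * σ) ∧
    jb η * jb σ * (jb η * jb σ - η * σ) ≤ jb η ^ 2 + jb σ ^ 2 - 1 := by
  have h_mul : (jb η * jb σ - η * σ) * (jb η * jb σ + η * σ) = jb η ^ 2 + jb σ ^ 2 - 1 := by
    linear_combination jb σ ^ 2 * jb_sq η + η ^ 2 * jb_sq σ - jb_sq η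
  have h_le : η * σ ≤ jb η * jb σ := (le_abs_self _).trans <| by
    rw [abs_mul]
    exact mul_le_mul (abs_le_jb η) (abs_le_jb σ) (abs_nonneg σ) (jb_pos η).le
  constructor <;> nlinarith

lemma jb_add_jb_sub_jb_add_bounds {η σ : ℝ} (h : 0 ≤ η * σ) :
    1 / 4 * (Rf η σ)⁻¹ ≤ jb η + jb σ - jb (η + σ) ∧
    jb η + jb σ - jb (η + σ) ≤ 2 * (Rf η σ)⁻¹ := by
  obtain ⟨h_lower, h_upper⟩ := jb_mul_jb_sub_mul_bounds h
  have h_mul := jb_add_jb_sub_jb_add_mul η σ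
  have hη := one_le_jb η
  have hσ := one_le_jb σ
  have hs := jb_pos (η + σ)
  rw [Rf, inv_div]
  set A := jb η
  set B := jb σ
  set D := A + B - jb (η + σ)
  have hAB : 0 < A * B := by positivity
  have hD : 0 < D := by
    refine pos_of_mul_pos_left (b := A + B + jb (η + σ)) ?_ (by positivity)
    nlinarith
  have hD_lower : 1 + 2 * (A * B - η * σ) ≤ D * (2 * (A + B)) := by
    rw [← h_mul]
    gcongr
    linarith
  have hD_upper : D * (A + B) ≤ 1 + 2 * (A * B - η * σ) := by
    rw [← h_mul]
    exact mul_le_mul_of_nonneg_left (by linarith) hD.le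
  constructor
  · rw [← mul_div_assoc, div_le_iff₀ hAB]
    refine le_of_mul_le_mul_right ?_ (by positivity : 0 < A + B)
    nlinarith [mul_le_mul_of_nonneg_left hD_lower hAB.le, sq_nonneg (A - B)]
  · rw [← mul_div_assoc, le_div_iff₀ hAB]
    refine le_of_mul_le_mul_right ?_ (by positivity : 0 < A + B)
    nlinarith [mul_le_mul_of_nonneg_left hD_upper hAB.le]

/-- The coordinate `η` of `x = (η, σ, p)`. -/
def etaForm : ℝ × ℝ × ℝ →L[ℝ] ℝ := .fst ℝ ℝ (ℝ × ℝ)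

/-- The coordinate `σ` of `x = (η, σ, p)`. -/
def sigmaForm : ℝ × ℝ × ℝ →L[ℝ] ℝ := .comp (.fst ℝ ℝ ℝ) (.snd ℝ ℝ (ℝ × ℝ))

/-- The coordinate `p` of `x = (η, σ, p)`. -/
def pForm : ℝ × ℝ × ℝ →L[ℝ] ℝ := .comp (.snd ℝ ℝ ℝ) (.snd ℝ ℝ (ℝ × ℝ))

/-- The output frequency `p + η + σ`. -/
noncomputable def sumForm : ℝ × ℝ × ℝ →L[ℝ] ℝ := pForm + etaForm + sigmaForm

/-- `R(η,σ)` as a function of `x = (η, σ, p)`. -/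
noncomputable def bracketR (x : ℝ × ℝ × ℝ) : ℝ := Rf (etaForm x) (sigmaForm x)

/-- The `(+,+)` phase `⟨p+η+σ⟩ − ⟨η⟩ − ⟨σ⟩` as a function of `x = (η, σ, p)`. -/
noncomputable def phase (x : ℝ × ℝ × ℝ) : ℝ :=
  jb (sumForm x) - jb (etaForm x) - jb (sigmaForm x)

lemma bracketR_pos (x : ℝ × ℝ × ℝ) : 0 < bracketR x := Rf_pos _ _

lemma continuous_bracketR : Continuous bracketR := by
  have h := continuous_jb
  unfold bracketR Rf
  exact Continuous.div (by fun_prop) (by fun_prop) fun x => (add_pos (jb_pos _) (jb_pos _)).ne'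

/-- The frame of the target estimate: `∂_η` gains `⟨η⟩⁻¹`, `∂_σ` gains `⟨σ⟩⁻¹` and `∂_p` costs
`R(η,σ)`, on an open set where the phase is nonresonant. -/
noncomputable def phaseFrame : SymbolFrame (ℝ × ℝ × ℝ) (Fin 3) where
  domain := {x | 0 < etaForm x ∧ 0 < sigmaForm x ∧ |pForm x| * bracketR x < 1 / 8}
  isOpen_domain := (isOpen_lt continuous_const etaForm.continuous).inter <|
    (isOpen_lt continuous_const sigmaForm.continuous).inter <|
      isOpen_lt (pForm.continuous.abs.mul continuous_bracketR) continuous_const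
  dir := ![(1, 0, 0), (0, 1, 0), (0, 0, 1)]
  gain := ![(jb ∘ etaForm)⁻¹, (jb ∘ sigmaForm)⁻¹, bracketR]

namespace phaseFrame

open SymbolFrame (IsSymbol)

variable {n : ℕ} {x : ℝ × ℝ × ℝ}

lemma abs_pForm_lt (hx : x ∈ phaseFrame.domain) : |pForm x| < 1 / 4 := by
  have hR : 1 / 2 ≤ bracketR x := half_le_Rf _ _
  nlinarith [hx.2.2, abs_nonneg (pForm x)]

lemma abs_jb_sumForm_sub_le (x : ℝ × ℝ × ℝ) :
    |jb (sumForm x) - jb (etaForm x + sigmaForm x)| ≤ |pForm x| := by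
  simpa [sumForm, add_assoc] using abs_jb_sub_jb_le (sumForm x) (etaForm x + sigmaForm x)

lemma jb_add_le_two_mul_jb_sumForm (hx : x ∈ phaseFrame.domain) :
    jb (etaForm x + sigmaForm x) ≤ 2 * jb (sumForm x) := by
  have h_lip := (abs_le.1 (abs_jb_sumForm_sub_le x)).1
  linarith [abs_pForm_lt hx, one_le_jb (sumForm x)]

lemma jb_etaForm_isBigO : (jb ∘ etaForm) =O[𝓟 phaseFrame.domain] (jb ∘ sumForm) :=
  isBigO_principal_of_norm_le zero_le_two fun x hx => by
    have h_mono := jb_le_jb hx.1.le (le_add_of_nonneg_right hx.2.1.le)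
    simpa [abs_of_pos (jb_pos _)] using h_mono.trans (jb_add_le_two_mul_jb_sumForm hx)

lemma jb_sigmaForm_isBigO : (jb ∘ sigmaForm) =O[𝓟 phaseFrame.domain] (jb ∘ sumForm) :=
  isBigO_principal_of_norm_le zero_le_two fun x hx => by
    have h_mono := jb_le_jb hx.2.1.le (le_add_of_nonneg_left hx.1.le)
    simpa [abs_of_pos (jb_pos _)] using h_mono.trans (jb_add_le_two_mul_jb_sumForm hx)

lemma bracketR_isBigO_etaForm : bracketR =O[𝓟 phaseFrame.domain] (jb ∘ etaForm) :=
  isBigO_principal_of_norm_le zero_le_one fun x _ => by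
    rw [Real.norm_of_nonneg (bracketR_pos x).le, one_mul]
    exact Rf_le_left _ _

lemma bracketR_isBigO_sigmaForm : bracketR =O[𝓟 phaseFrame.domain] (jb ∘ sigmaForm) :=
  isBigO_principal_of_norm_le zero_le_one fun x _ => by
    rw [Real.norm_of_nonneg (bracketR_pos x).le, one_mul]
    exact (Rf_comm _ _).trans_le (Rf_le_left _ _)

lemma one_isBigO_bracketR : (fun _ => (1 : ℝ)) =O[𝓟 phaseFrame.domain] bracketR :=
  isBigO_principal_of_norm_le zero_le_two fun x _ => by
    have hR : 1 / 2 ≤ bracketR x := half_le_Rf _ _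
    rw [norm_one]
    linarith

lemma jb_inv_isBigO_inv {L u : ℝ × ℝ × ℝ → ℝ} (hu : u =O[𝓟 phaseFrame.domain] (jb ∘ L))
    (hu₀ : ∀ x, 0 < u x) : (jb⁻¹ ∘ L) =O[𝓟 phaseFrame.domain] u⁻¹ :=
  hu.inv_rev (.of_forall fun x hx => absurd hx (hu₀ x).ne')

lemma jb_inv_sumForm_isBigO_gain (i : Fin 3) :
    (jb⁻¹ ∘ sumForm) =O[𝓟 phaseFrame.domain] phaseFrame.gain i := by
  match i with
  | 0 => exact jb_inv_isBigO_inv jb_etaForm_isBigO fun _ => jb_pos _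
  | 1 => exact jb_inv_isBigO_inv jb_sigmaForm_isBigO fun _ => jb_pos _
  | 2 =>
    refine .trans (.of_bound' (.of_forall fun x => ?_)) one_isBigO_bracketR
    simpa [abs_of_pos (jb_pos _)] using inv_le_one_of_one_le₀ (one_le_jb (sumForm x))

lemma phase_bounds (hx : x ∈ phaseFrame.domain) :
    1 / 8 * (bracketR x)⁻¹ ≤ |phase x| ∧ |phase x| ≤ 3 * (bracketR x)⁻¹ := by
  have h_zero := jb_add_jb_sub_jb_add_bounds (mul_pos hx.1 hx.2.1).le
  change 1 / 4 * (bracketR x)⁻¹ ≤ _ ∧ _ ≤ 2 * (bracketR x)⁻¹ at h_zero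
  have hp : |pForm x| < 1 / 8 * (bracketR x)⁻¹ := by
    rw [← div_eq_mul_inv, lt_div_iff₀ (bracketR_pos x)]
    exact hx.2.2
  have h_lip := abs_le.1 (abs_jb_sumForm_sub_le x)
  rw [phase, abs_of_nonpos (by linarith)]
  constructor <;> linarith

lemma phase_isBigO : phase =O[𝓟 phaseFrame.domain] bracketR⁻¹ :=
  isBigO_principal_of_norm_le zero_le_three fun _ hx => (phase_bounds hx).2

lemma bracketR_inv_isBigO : bracketR⁻¹ =O[𝓟 phaseFrame.domain] phase := by
  refine .of_bound 8 (eventually_principal.2 fun x hx => ?_)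
  rw [Pi.inv_apply, Real.norm_of_nonneg (inv_pos.2 (bracketR_pos x)).le, Real.norm_eq_abs]
  linarith [(phase_bounds hx).1]

variable {w f : ℝ → ℝ}

lemma isSymbol_comp_etaForm (h : bracketFrame.IsSymbol n w f) :
    phaseFrame.IsSymbol n (w ∘ etaForm) (f ∘ etaForm) := by
  refine h.comp_continuousLinearMap etaForm
    (fun x hx => neg_one_lt_zero.trans hx.1) fun i => ⟨(), etaForm (phaseFrame.dir i), ?_, ?_⟩
  · simp [bracketFrame]
  · match i with
    | 0 => simpa [phaseFrame, etaForm] using! isBigO_refl _ _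
    | 1 => simp [phaseFrame, etaForm, isBigO_zero]
    | 2 => simp [phaseFrame, etaForm, isBigO_zero]

lemma isSymbol_comp_sigmaForm (h : bracketFrame.IsSymbol n w f) :
    phaseFrame.IsSymbol n (w ∘ sigmaForm) (f ∘ sigmaForm) := by
  refine h.comp_continuousLinearMap sigmaForm
    (fun x hx => neg_one_lt_zero.trans hx.2.1) fun i => ⟨(), sigmaForm (phaseFrame.dir i), ?_, ?_⟩
  · simp [bracketFrame]
  · match i with
    | 0 => simp [phaseFrame, sigmaForm, isBigO_zero]
    | 1 => simpa [phaseFrame, sigmaForm] using! isBigO_refl _ _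
    | 2 => simp [phaseFrame, sigmaForm, isBigO_zero]

lemma isSymbol_comp_sumForm (h : bracketFrame.IsSymbol n w f) :
    phaseFrame.IsSymbol n (w ∘ sumForm) (f ∘ sumForm) := by
  refine h.comp_continuousLinearMap sumForm (fun x hx => ?_) fun i => ⟨(), 1, ?_, ?_⟩
  · change -1 < pForm x + etaForm x + sigmaForm x
    linarith [hx.1, hx.2.1, neg_abs_le (pForm x), abs_pForm_lt hx]
  · fin_cases i <;> simp [phaseFrame, sumForm, pForm, etaForm, sigmaForm, bracketFrame]
  · simpa [bracketFrame] using! jb_inv_sumForm_isBigO_gain i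

lemma jb_inv_sq_isBigO {L : ℝ × ℝ × ℝ → ℝ} {i : Fin 3}
    (hL : bracketR =O[𝓟 phaseFrame.domain] (jb ∘ L))
    (hi : (jb⁻¹ ∘ L) =O[𝓟 phaseFrame.domain] phaseFrame.gain i) :
    ((jb⁻¹ ^ 2) ∘ L) =O[𝓟 phaseFrame.domain] (bracketR⁻¹ * phaseFrame.gain i) :=
  ((jb_inv_isBigO_inv hL bracketR_pos).mul hi).congr_left fun _ => (sq _).symm

lemma hasFDerivAt_phase (x : ℝ × ℝ × ℝ) :
    HasFDerivAt phase ((sumForm x / jb (sumForm x)) • sumForm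
      - (etaForm x / jb (etaForm x)) • etaForm - (sigmaForm x / jb (sigmaForm x)) • sigmaForm) x :=
  (((hasDerivAt_jb _).comp_hasFDerivAt x sumForm.hasFDerivAt).sub
    ((hasDerivAt_jb _).comp_hasFDerivAt x etaForm.hasFDerivAt)).sub
    ((hasDerivAt_jb _).comp_hasFDerivAt x sigmaForm.hasFDerivAt)

lemma isSymbol_phase : phaseFrame.IsSymbol n bracketR⁻¹ phase := by
  cases n with
  | zero => exact phase_isBigO
  | succ n =>
    have h_sum (i) := (isSymbol_comp_sumForm (n := n) bracketFrame.isSymbol_div_jb_sub_one).mono <|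
      jb_inv_sq_isBigO (bracketR_isBigO_etaForm.trans jb_etaForm_isBigO)
        (jb_inv_sumForm_isBigO_gain i)
    have h_eta := (isSymbol_comp_etaForm (n := n) bracketFrame.isSymbol_div_jb_sub_one).mono <|
      jb_inv_sq_isBigO (i := 0) bracketR_isBigO_etaForm (isBigO_refl _ _)
    have h_sigma := (isSymbol_comp_sigmaForm (n := n) bracketFrame.isSymbol_div_jb_sub_one).mono <|
      jb_inv_sq_isBigO (i := 1) bracketR_isBigO_sigmaForm (isBigO_refl _ _)
    have h_p := isSymbol_comp_sumForm (n := n) bracketFrame.isSymbol_div_jb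
    refine .of_hasFDerivAt phase_isBigO (fun x _ => hasFDerivAt_phase x) fun i => ?_
    match i with
    | 0 =>
      refine ((h_sum 0).sub h_eta).congr fun x _ => ?_
      simp [phaseFrame, sumForm, pForm, etaForm, sigmaForm]
    | 1 =>
      refine ((h_sum 1).sub h_sigma).congr fun x _ => ?_
      simp [phaseFrame, sumForm, pForm, etaForm, sigmaForm]
    | 2 =>
      refine (h_p.congr_weight fun x _ => ?_).congr fun x _ => ?_
      · simp [phaseFrame, (bracketR_pos x).ne']
      · simp [phaseFrame, sumForm, pForm, etaForm, sigmaForm]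

lemma bracketR_mul_gain_pow (a b c : ℕ) (η σ p : ℝ) :
    (bracketR * phaseFrame.gain 2 ^ c * phaseFrame.gain 1 ^ b * phaseFrame.gain 0 ^ a) (η, σ, p) =
      Rf η σ ^ (1 + c) / (jb η ^ a * jb σ ^ b) := by
  change Rf η σ * Rf η σ ^ c * (jb σ)⁻¹ ^ b * (jb η)⁻¹ ^ a = _
  rw [inv_pow, inv_pow, pow_add, pow_one, div_eq_mul_inv, mul_inv_rev, mul_assoc]

lemma isSymbol_phase_inv : phaseFrame.IsSymbol n bracketR phase⁻¹ := by
  simpa using isSymbol_phase.inv (fun x _ => (inv_pos.2 (bracketR_pos x)).ne') bracketR_inv_isBigO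

end phaseFrame

lemma DrecPhiPP_eq_iterate_dirDeriv (a b c : ℕ) (η σ p : ℝ) :
    DrecPhiPP a b c η σ p = ((phaseFrame.dirDeriv 0)^[a] ((phaseFrame.dirDeriv 1)^[b]
      ((phaseFrame.dirDeriv 2)^[c] phase⁻¹))) (η, σ, p) := by
  have h_eta (f : ℝ × ℝ × ℝ → ℝ) (σ p : ℝ) :=
    phaseFrame.iteratedDeriv_comp_line (γ := fun t => (t, σ, p)) (i := 0) (by simp [phaseFrame]) f
  have h_sigma (f : ℝ × ℝ × ℝ → ℝ) (η p : ℝ) :=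
    phaseFrame.iteratedDeriv_comp_line (γ := fun t => (η, t, p)) (i := 1) (by simp [phaseFrame]) f
  have h_p (f : ℝ × ℝ × ℝ → ℝ) (η σ : ℝ) :=
    phaseFrame.iteratedDeriv_comp_line (γ := fun t => (η, σ, t)) (i := 2) (by simp [phaseFrame]) f
  simp only [funext_iff, Function.comp_def] at h_eta h_sigma h_p
  simp only [← h_eta, ← h_sigma, ← h_p]
  rfl

/-- Derivative bounds for the reciprocal of the `(+,+)` Klein–Gordon phase near the
set `ξ = η + σ` (Lemma 6.2 (i) in the paper):
`|∂_η^a ∂_σ^b ∂_p^c (⟨p+η+σ⟩−⟨η⟩−⟨σ⟩)⁻¹| ≲ R(η,σ)^{1+c} ⟨η⟩^{−a} ⟨σ⟩^{−b}`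
for `η, σ > 0` and `|p| ≤ κ/R(η,σ)`. -/
theorem derivative_bounds_reciprocal_phase_pp (a b c : ℕ) :
    ∃ κ C : ℝ, 0 < κ ∧ 0 < C ∧
      ∀ η σ p : ℝ, 0 < η → 0 < σ → |p| ≤ κ / Rf η σ →
        |DrecPhiPP a b c η σ p| ≤
          C * Rf η σ ^ (1 + c) / (jb η ^ a * jb σ ^ b) := by
  obtain ⟨C, hC, h_bound⟩ := (((phaseFrame.isSymbol_phase_inv (n := 0 + a + b + c)
    |>.iterate_dirDeriv 2).iterate_dirDeriv 1).iterate_dirDeriv 0).isBigO.exists_pos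
  rw [isBigOWith_principal] at h_bound
  refine ⟨1 / 16, C, by norm_num, hC, fun η σ p hη hσ hp => ?_⟩
  have hR := Rf_pos η σ
  have hη' := jb_pos η
  have hσ' := jb_pos σ
  rw [le_div_iff₀ hR] at hp
  have h := h_bound (η, σ, p) ⟨hη, hσ, hp.trans_lt (by norm_num)⟩
  rwa [← DrecPhiPP_eq_iterate_dirDeriv, phaseFrame.bracketR_mul_gain_pow,
    Real.norm_eq_abs, Real.norm_of_nonneg (by positivity), ← mul_div_assoc] at h
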